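/- (Energy upper bound for H-monotone solutions) Let n, m ≥ 1 and let u = (u_1,…,u_m) be a bounded H-monotone solution of system (S) on ℝⁿ such that each |∇u_i| is bounded and M := max_i sup_x Φ'(|∇u_i(x)|²)|∇u_i(x)| < ∞. Suppose there are constants a = (a_1,…,a_m) such that for each i, lim_{x_n→∞} u_i(x', x_n) = a_i for every x' ∈ ℝ^{n−1}, and assume the shifted functions u_i^t(x) := u_i(x', x_n + t) converge to the constant a_i in C¹ on compact subsets of ℝⁿ as t → ∞. Then there exists a constant C, independent of R, such that for all R ≥ 1: ∫_{B_R} [ ∑_{i=1}^m Φ(|∇u_i|²) − 2H̃(u) + 2H̃(a) ] dx ≤ C R^{n−1}. -/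

import Mathlib

open MeasureTheory Metric Finset Filter
open scoped RealInnerProductSpace

noncomputable section

/-- Divergence of a vector field on Euclidean space. -/
def vdiv {N : ℕ} (F : EuclideanSpace ℝ (Fin N) → EuclideanSpace ℝ (Fin N))
    (x : EuclideanSpace ℝ (Fin N)) : ℝ :=
  ∑ i, fderiv ℝ F x (EuclideanSpace.single i 1) i

/-- The unit vector in the last coordinate direction of `ℝ^{n+1}`. -/
def elast (n : ℕ) : EuclideanSpace ℝ (Fin (n + 1)) :=
  EuclideanSpace.single (Fin.last n) 1

/-!
For a direction `v` in which `u` is monotone, the derivative `∂ᵥe` of the energy density is the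
divergence of `W = 2 ∑ᵢ ∂ᵥuᵢ Φ'(|∇uᵢ|²)∇uᵢ`, and since each `∂ᵥuᵢ` has a sign, `‖W‖ ≤ ∂ᵥg` for the
bounded function `g = 2M ∑ᵢ ±uᵢ`. Hence, for a cutoff `η`, integration by parts shows that
`t ↦ ∫ η e(· + tv) + ∫ ‖∇η‖ g(· + tv)` is monotone. As `e(· + tv) → 0` locally uniformly, comparing
`t = 0` with `t → ∞` gives `∫ η e ≤ 2 sup |g| ∫ ‖∇η‖`. For a cutoff between the balls of radii `R`
and `R + 1` the right-hand side is of the order of the volume of the annulus, that is `Rᴺ⁻¹`.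
-/

open scoped Topology

/-! ### Parameter integrals along a direction -/

section Directional

variable {E : Type*} [NormedAddCommGroup E] [NormedSpace ℝ E] {f : E → ℝ}

lemma hasDerivAt_comp_add_smul (hf : Differentiable ℝ f) (v x : E) (t : ℝ) :
    HasDerivAt (fun s : ℝ => f (x + s • v)) (fderiv ℝ f (x + t • v) v) t := by
  have hline : HasDerivAt (fun s : ℝ => x + s • v) v t := by
    simpa using ((hasDerivAt_id t).smul_const v).const_add x
  exact (hf _).hasFDerivAt.comp_hasDerivAt t hline

lemma continuous_fderiv_apply_const (hf : ContDiff ℝ 1 f) (v : E) :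
    Continuous fun x => fderiv ℝ f x v :=
  (hf.continuous_fderiv one_ne_zero).clm_apply continuous_const

lemma contDiff_fderiv_apply_const (hf : ContDiff ℝ 2 f) (v : E) :
    ContDiff ℝ 1 fun x => fderiv ℝ f x v :=
  (hf.fderiv_right (by norm_num)).clm_apply contDiff_const

end Directional

section ParameterIntegral

variable {E : Type*} [NormedAddCommGroup E] [MeasurableSpace E] [BorelSpace E] {μ : Measure E}
  [IsFiniteMeasureOnCompacts μ]

lemma integrable_mul_of_hasCompactSupport {k f : E → ℝ} (hk : Continuous k)
    (hks : HasCompactSupport k) (hf : Continuous f) : Integrable (fun x => k x * f x) μ :=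
  (hk.mul hf).integrable_of_hasCompactSupport hks.mul_right

lemma integrable_fderiv_apply_of_hasCompactSupport [NormedSpace ℝ E] {η : E → ℝ} {W : E → E}
    (hη : ContDiff ℝ 1 η) (hηs : HasCompactSupport η) (hW : Continuous W) :
    Integrable (fun x => fderiv ℝ η x (W x)) μ :=
  ((hη.continuous_fderiv one_ne_zero).clm_apply hW).integrable_of_hasCompactSupport
    ((hηs.fderiv ℝ).mono fun x hx hx' => hx (by simp [hx']))

lemma tendsto_integral_mul_of_tendstoUniformlyOn {k : E → ℝ} (hk : Continuous k)
    (hks : HasCompactSupport k) {f : ℝ → E → ℝ} (hf : ∀ t, Continuous (f t))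
    (hlim : TendstoUniformlyOn f (fun _ => 0) atTop (tsupport k)) :
    Tendsto (fun t => ∫ x, k x * f t x ∂μ) atTop (𝓝 0) := by
  have hbound : ∀ᶠ t in atTop, ∀ x, ‖k x * f t x‖ ≤ |k x| := by
    filter_upwards [tendstoUniformlyOn_iff.1 hlim 1 one_pos] with t ht x
    rw [norm_mul, Real.norm_eq_abs]
    by_cases hx : x ∈ tsupport k
    · exact mul_le_of_le_one_right (abs_nonneg _) (by simpa using (ht x hx).le)
    · simp [image_eq_zero_of_notMem_tsupport hx]
  have hpointwise (x : E) : Tendsto (fun t => k x * f t x) atTop (𝓝 0) := by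
    by_cases hx : x ∈ tsupport k
    · simpa using (hlim.tendsto_at hx).const_mul (k x)
    · simp [image_eq_zero_of_notMem_tsupport hx]
  simpa using tendsto_integral_filter_of_dominated_convergence (μ := μ) (f := fun _ => (0 : ℝ))
    (fun x => |k x|)
    (Eventually.of_forall fun t => (hk.mul (hf t)).aestronglyMeasurable)
    (hbound.mono fun t ht => Eventually.of_forall ht)
    (hk.abs.integrable_of_hasCompactSupport hks.norm)
    (Eventually.of_forall hpointwise)

lemma hasDerivAt_integral_mul_comp_add_smul [NormedSpace ℝ E] {k f : E → ℝ} (hk : Continuous k)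
    (hks : HasCompactSupport k) (hf : ContDiff ℝ 1 f) (v : E) (t : ℝ) :
    HasDerivAt (fun s : ℝ => ∫ x, k x * f (x + s • v) ∂μ)
      (∫ x, k x * fderiv ℝ f (x + t • v) v ∂μ) t := by
  have hf' := continuous_fderiv_apply_const hf v
  have hfc := hf.continuous
  obtain ⟨D, hD⟩ := (hks.isCompact.prod (isCompact_closedBall t 1)).exists_bound_of_continuousOn
    (f := fun p : E × ℝ => fderiv ℝ f (p.1 + p.2 • v) v) (hf'.comp (by fun_prop)).continuousOn
  refine (hasDerivAt_integral_of_dominated_loc_of_deriv_le (s := ball t 1)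
    (F := fun s x => k x * f (x + s • v)) (F' := fun s x => k x * fderiv ℝ f (x + s • v) v)
    (bound := fun x => |k x| * D) (ball_mem_nhds t one_pos) ?_ ?_ ?_ ?_ ?_ ?_).2
  · exact Eventually.of_forall fun s => Continuous.aestronglyMeasurable (by fun_prop)
  · exact integrable_mul_of_hasCompactSupport hk hks (by fun_prop)
  · exact Continuous.aestronglyMeasurable (by fun_prop)
  · refine Eventually.of_forall fun x s hs => ?_
    rw [norm_mul, Real.norm_eq_abs]
    by_cases hx : x ∈ tsupport k
    · exact mul_le_mul_of_nonneg_left (hD (x, s) ⟨hx, ball_subset_closedBall hs⟩) (abs_nonneg _)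
    · simp [image_eq_zero_of_notMem_tsupport hx]
  · exact integrable_mul_of_hasCompactSupport hk.abs hks.norm continuous_const
  · exact Eventually.of_forall fun x s _ =>
      (hasDerivAt_comp_add_smul (hf.differentiable one_ne_zero) v x s).const_mul (k x)

end ParameterIntegral

/-! ### Divergence -/

section Divergence

variable {N : ℕ} {W V : EuclideanSpace ℝ (Fin N) → EuclideanSpace ℝ (Fin N)}
  {φ η : EuclideanSpace ℝ (Fin N) → ℝ} {x : EuclideanSpace ℝ (Fin N)}

lemma clm_apply_eq_sum_single (L : EuclideanSpace ℝ (Fin N) →L[ℝ] ℝ)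
    (w : EuclideanSpace ℝ (Fin N)) : L w = ∑ j, L (EuclideanSpace.single j 1) * w j := by
  conv_lhs => rw [← (EuclideanSpace.basisFun (Fin N) ℝ).sum_repr w]
  simp [mul_comm]

lemma vdiv_smul (hφ : DifferentiableAt ℝ φ x) (hV : DifferentiableAt ℝ V x) :
    vdiv (fun y => φ y • V y) x = φ x * vdiv V x + fderiv ℝ φ x (V x) := by
  rw [clm_apply_eq_sum_single (fderiv ℝ φ x), vdiv, vdiv, Finset.mul_sum,
    ← Finset.sum_add_distrib]
  exact Finset.sum_congr rfl fun j _ => by simp [fderiv_fun_smul hφ hV]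

lemma vdiv_sum {ι : Type*} [Fintype ι]
    {Y : ι → EuclideanSpace ℝ (Fin N) → EuclideanSpace ℝ (Fin N)}
    (hY : ∀ i, DifferentiableAt ℝ (Y i) x) :
    vdiv (fun y => ∑ i, Y i y) x = ∑ i, vdiv (Y i) x := by
  simp only [vdiv]
  rw [fderiv_fun_sum fun i _ => hY i, Finset.sum_comm]
  exact Finset.sum_congr rfl fun j _ => by simp

lemma vdiv_comp_add_right (W : EuclideanSpace ℝ (Fin N) → EuclideanSpace ℝ (Fin N))
    (b x : EuclideanSpace ℝ (Fin N)) : vdiv (fun y => W (y + b)) x = vdiv W (x + b) := by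
  simp only [vdiv, fderiv_comp_add_right]

lemma fderiv_euclidean_apply (hW : DifferentiableAt ℝ W x) (v : EuclideanSpace ℝ (Fin N))
    (j : Fin N) : fderiv ℝ (fun y => W y j) x v = fderiv ℝ W x v j := by
  have h := (EuclideanSpace.proj (𝕜 := ℝ) j).hasFDerivAt.comp x hW.hasFDerivAt
  exact congrArg (fun L : _ →L[ℝ] ℝ => L v) h.fderiv

lemma continuous_vdiv (hW : ContDiff ℝ 1 W) : Continuous (vdiv W) := by
  have := hW.continuous_fderiv one_ne_zero
  unfold vdiv
  fun_prop

theorem integral_vdiv_eq_zero (hW : ContDiff ℝ 1 W) (hWs : HasCompactSupport W) :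
    ∫ x, vdiv W x = 0 := by
  have hWj (j : Fin N) : ContDiff ℝ 1 fun x => W x j := by fun_prop
  have hWjs (j : Fin N) : HasCompactSupport fun x => W x j :=
    hWs.comp_left (g := fun w : EuclideanSpace ℝ (Fin N) => w j) rfl
  have hint (j : Fin N) :
      Integrable fun x => fderiv ℝ (fun y => W y j) x (EuclideanSpace.single j 1) :=
    (continuous_fderiv_apply_const (hWj j) _).integrable_of_hasCompactSupport
      ((hWjs j).fderiv_apply ℝ _)
  have hzero (j : Fin N) :
      ∫ x, fderiv ℝ (fun y => W y j) x (EuclideanSpace.single j 1) = 0 := by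
    simpa using integral_mul_fderiv_eq_neg_fderiv_mul_of_integrable (μ := volume)
      (f := fun _ => (1 : ℝ)) (g := fun y => W y j) (v := EuclideanSpace.single j 1)
      (by simp) (by simpa using hint j)
      (by simpa using (hWj j).continuous.integrable_of_hasCompactSupport (hWjs j))
      (fun _ _ => differentiableAt_const _) (fun x _ => (hWj j).differentiable one_ne_zero x)
  have hvdiv : vdiv W = fun x => ∑ j, fderiv ℝ (fun y => W y j) x (EuclideanSpace.single j 1) :=
    funext fun x => Finset.sum_congr rfl fun j _ =>
      (fderiv_euclidean_apply (hW.differentiable one_ne_zero x) _ j).symm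
  rw [hvdiv, integral_finsetSum _ fun j _ => hint j]
  exact Finset.sum_eq_zero fun j _ => hzero j

theorem integral_mul_vdiv (hη : ContDiff ℝ 1 η) (hηs : HasCompactSupport η)
    (hW : ContDiff ℝ 1 W) : ∫ x, η x * vdiv W x = -∫ x, fderiv ℝ η x (W x) := by
  rw [eq_neg_iff_add_eq_zero, ← integral_add
    (integrable_mul_of_hasCompactSupport hη.continuous hηs (continuous_vdiv hW))
    (integrable_fderiv_apply_of_hasCompactSupport hη hηs hW.continuous),
    ← integral_vdiv_eq_zero (hη.smul hW) hηs.smul_right]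
  exact integral_congr_ae <| Eventually.of_forall fun x =>
    (vdiv_smul (hη.differentiable one_ne_zero x) (hW.differentiable one_ne_zero x)).symm

end Divergence

/-! ### Densities whose directional derivative is a divergence -/

section SlidingDensity

variable {N : ℕ} {v : EuclideanSpace ℝ (Fin N)} {e g η : EuclideanSpace ℝ (Fin N) → ℝ}
  {W : EuclideanSpace ℝ (Fin N) → EuclideanSpace ℝ (Fin N)} {G : ℝ}

lemma monotone_integral_mul_add_integral_norm_fderiv_mul (he : ContDiff ℝ 1 e)
    (hg : ContDiff ℝ 1 g) (hW : ContDiff ℝ 1 W) (hdiv : ∀ x, fderiv ℝ e x v = vdiv W x)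
    (hWg : ∀ x, ‖W x‖ ≤ fderiv ℝ g x v) (hη : ContDiff ℝ 1 η) (hηs : HasCompactSupport η) :
    Monotone fun t : ℝ =>
      (∫ x, η x * e (x + t • v)) + ∫ x, ‖fderiv ℝ η x‖ * g (x + t • v) := by
  have hdη := (hη.continuous_fderiv one_ne_zero).norm
  have hdηs := (hηs.fderiv ℝ).norm
  have hderiv (t : ℝ) := (hasDerivAt_integral_mul_comp_add_smul (μ := volume)
    hη.continuous hηs he v t).fun_add (hasDerivAt_integral_mul_comp_add_smul (μ := volume)
      hdη hdηs hg v t)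
  refine monotone_of_deriv_nonneg (fun t => (hderiv t).differentiableAt) fun t => ?_
  have hWt : ContDiff ℝ 1 fun x => W (x + t • v) := hW.comp (contDiff_id.add contDiff_const)
  have hparts : ∫ x, η x * fderiv ℝ e (x + t • v) v = -∫ x, fderiv ℝ η x (W (x + t • v)) := by
    simp only [hdiv, ← vdiv_comp_add_right W]
    exact integral_mul_vdiv hη hηs hWt
  have hle : ∫ x, fderiv ℝ η x (W (x + t • v))
      ≤ ∫ x, ‖fderiv ℝ η x‖ * fderiv ℝ g (x + t • v) v := by
    refine integral_mono
      (integrable_fderiv_apply_of_hasCompactSupport hη hηs hWt.continuous)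
      (integrable_mul_of_hasCompactSupport hdη hdηs
        ((continuous_fderiv_apply_const hg v).comp (by fun_prop))) fun x => ?_
    calc fderiv ℝ η x (W (x + t • v)) ≤ ‖fderiv ℝ η x‖ * ‖W (x + t • v)‖ :=
          (le_abs_self _).trans ((fderiv ℝ η x).le_opNorm _)
      _ ≤ _ := mul_le_mul_of_nonneg_left (hWg _) (norm_nonneg _)
  rw [(hderiv t).deriv, hparts]
  linarith

theorem integral_mul_le_of_fderiv_eq_vdiv (he : ContDiff ℝ 1 e) (hg : ContDiff ℝ 1 g)
    (hW : ContDiff ℝ 1 W) (hdiv : ∀ x, fderiv ℝ e x v = vdiv W x)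
    (hWg : ∀ x, ‖W x‖ ≤ fderiv ℝ g x v) (hgG : ∀ x, |g x| ≤ G)
    (hlim : ∀ K : Set (EuclideanSpace ℝ (Fin N)), IsCompact K →
      TendstoUniformlyOn (fun (t : ℝ) x => e (x + t • v)) (fun _ => 0) atTop K)
    (hη : ContDiff ℝ 1 η) (hηs : HasCompactSupport η) :
    ∫ x, η x * e x ≤ 2 * G * ∫ x, ‖fderiv ℝ η x‖ := by
  have hdη := (hη.continuous_fderiv one_ne_zero).norm
  have hdηs := (hηs.fderiv ℝ).norm
  have hgt (t : ℝ) : |∫ x, ‖fderiv ℝ η x‖ * g (x + t • v)| ≤ G * ∫ x, ‖fderiv ℝ η x‖ := by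
    have hint : Integrable fun x => G * ‖fderiv ℝ η x‖ :=
      (hdη.integrable_of_hasCompactSupport hdηs).const_mul G
    rw [← integral_const_mul, ← Real.norm_eq_abs]
    refine norm_integral_le_of_norm_le hint (Eventually.of_forall fun x => ?_)
    rw [norm_mul, norm_norm, mul_comm]
    exact mul_le_mul_of_nonneg_right (hgG _) (norm_nonneg _)
  have hmono := monotone_integral_mul_add_integral_norm_fderiv_mul he hg hW hdiv hWg hη hηs
  have hshift : ∀ᶠ t : ℝ in atTop, ∫ x, η x * e x ≤
      (∫ x, η x * e (x + t • v)) + 2 * G * ∫ x, ‖fderiv ℝ η x‖ := by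
    filter_upwards [eventually_ge_atTop 0] with t ht
    have hle := hmono ht
    have h0 := (abs_le.1 (hgt 0)).1
    have h1 := (abs_le.1 (hgt t)).2
    simp only [zero_smul, add_zero] at hle h0
    linarith
  have hvanish := tendsto_integral_mul_of_tendstoUniformlyOn (μ := volume) hη.continuous hηs
    (fun t => he.continuous.comp (by fun_prop)) (hlim _ hηs.isCompact)
  simpa using ge_of_tendsto (hvanish.add_const _) hshift

end SlidingDensity

/-! ### Radial cutoffs and annuli -/

lemma exists_lipschitzWith_smoothTransition :
    ∃ C, LipschitzWith C Real.smoothTransition := by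
  obtain ⟨C, hC⟩ := (Real.smoothTransition.contDiff (n := 1)).contDiffOn.exists_lipschitzOnWith
    one_ne_zero (convex_Icc (0 : ℝ) 1) isCompact_Icc
  have hcomp := hC.to_restrict.comp (LipschitzWith.projIcc (zero_le_one (α := ℝ)))
  refine ⟨C * 1, ?_⟩
  convert hcomp using 1
  exact funext fun x => Real.smoothTransition.projIcc.symm

/-- A smooth cutoff equal to `1` on `closedBall 0 R` and vanishing outside `ball 0 (R + 1)`,
whose Lipschitz constant does not depend on `R`. -/
def radialCutoff {E : Type*} [NormedAddCommGroup E] (R : ℝ) (x : E) : ℝ :=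
  Real.smoothTransition (R + 1 - ‖x‖)

namespace radialCutoff

section Normed

variable {E : Type*} [NormedAddCommGroup E] {R : ℝ} {x : E}

lemma nonneg : 0 ≤ radialCutoff R x := Real.smoothTransition.nonneg _

lemma le_one : radialCutoff R x ≤ 1 := Real.smoothTransition.le_one _

lemma eq_one (hx : ‖x‖ ≤ R) : radialCutoff R x = 1 :=
  Real.smoothTransition.one_of_one_le (by linarith)

lemma eq_zero (hx : R + 1 ≤ ‖x‖) : radialCutoff R x = 0 :=
  Real.smoothTransition.zero_of_nonpos (by linarith)

lemma eventuallyEq_one (hx : ‖x‖ < R) : radialCutoff R =ᶠ[𝓝 x] fun _ => 1 :=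
  (continuous_norm.continuousAt.eventually_lt_const hx).mono fun _ h => eq_one h.le

lemma tsupport_subset : tsupport (radialCutoff R : E → ℝ) ⊆ closedBall 0 (R + 1) :=
  closure_minimal (fun _ hy => mem_closedBall_zero_iff.2 <| le_of_not_ge fun h => hy (eq_zero h))
    isClosed_closedBall

lemma hasCompactSupport [ProperSpace E] : HasCompactSupport (radialCutoff R : E → ℝ) :=
  (isCompact_closedBall _ _).of_isClosed_subset (isClosed_tsupport _) tsupport_subset

lemma lipschitzWith {C : NNReal} (hC : LipschitzWith C Real.smoothTransition) (R : ℝ) :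
    LipschitzWith C (radialCutoff R : E → ℝ) := by
  refine LipschitzWith.of_dist_le_mul fun x y => (hC.dist_le_mul _ _).trans ?_
  refine mul_le_mul_of_nonneg_left ?_ C.2
  rw [dist_sub_left]
  exact dist_norm_norm_le x y |>.trans_eq (dist_eq_norm x y).symm

lemma support_fderiv_subset [NormedSpace ℝ E] :
    Function.support (fderiv ℝ (radialCutoff R : E → ℝ)) ⊆ closedBall 0 (R + 1) \ ball 0 R := by
  refine fun x hx => ⟨tsupport_subset (_root_.support_fderiv_subset ℝ hx), fun hxR => hx ?_⟩
  rw [(eventuallyEq_one (mem_ball_zero_iff.1 hxR)).fderiv_eq, fderiv_fun_const]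
  rfl

end Normed

lemma contDiff {E : Type*} [NormedAddCommGroup E] [InnerProductSpace ℝ E] {R : ℝ} (hR : 0 < R)
    {n : ℕ∞} : ContDiff ℝ n (radialCutoff R : E → ℝ) := by
  refine contDiff_iff_contDiffAt.2 fun x => ?_
  rcases eq_or_ne x 0 with rfl | hx
  · exact contDiffAt_const.congr_of_eventuallyEq (eventuallyEq_one (by simpa using hR))
  · exact Real.smoothTransition.contDiffAt.comp x (contDiffAt_const.sub (contDiffAt_norm ℝ hx))

end radialCutoff

section Annulus

variable {E : Type*} [NormedAddCommGroup E] [NormedSpace ℝ E] [FiniteDimensional ℝ E]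
  [MeasurableSpace E]

lemma integral_norm_fderiv_radialCutoff_le (μ : Measure E) [IsFiniteMeasureOnCompacts μ]
    {C : NNReal} (hC : LipschitzWith C Real.smoothTransition) (R : ℝ) :
    ∫ x, ‖fderiv ℝ (radialCutoff R) x‖ ∂μ ≤ C * μ.real (closedBall 0 (R + 1) \ ball 0 R) := by
  rw [← setIntegral_eq_integral_of_forall_compl_eq_zero (s := closedBall 0 (R + 1) \ ball 0 R)
    fun x hx => norm_eq_zero.2 <| Function.notMem_support.1
      fun h => hx (radialCutoff.support_fderiv_subset h)]
  refine (Real.le_norm_self _).trans (norm_setIntegral_le_of_norm_le_const ?_ fun x _ => ?_)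
  · exact (measure_mono Set.sdiff_subset).trans_lt (isCompact_closedBall _ _).measure_lt_top
  · rw [norm_norm]
    exact norm_fderiv_le_of_lipschitz ℝ (radialCutoff.lipschitzWith hC R)

variable [BorelSpace E]

lemma measureReal_closedBall_sdiff_ball (μ : Measure E) [μ.IsAddHaarMeasure] {r R : ℝ}
    (hr : 0 < r) (hrR : r ≤ R) :
    μ.real (closedBall 0 R \ ball 0 r)
      = (R ^ Module.finrank ℝ E - r ^ Module.finrank ℝ E) * μ.real (ball 0 1) := by
  rw [measureReal_sdiff ((ball_subset_ball hrR).trans ball_subset_closedBall) measurableSet_ball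
    measure_closedBall_lt_top.ne, Measure.addHaar_real_closedBall μ 0 (hr.le.trans hrR),
    measureReal_def μ (ball 0 r), Measure.addHaar_ball_of_pos μ 0 hr, ENNReal.toReal_mul,
    ENNReal.toReal_ofReal (by positivity), ← measureReal_def, sub_mul]

lemma exists_measureReal_annulus_le (μ : Measure E) [μ.IsAddHaarMeasure] :
    ∃ c, ∀ R : ℝ, 1 ≤ R →
      μ.real (closedBall 0 (R + 1) \ ball 0 R) ≤ c * R ^ (Module.finrank ℝ E - 1) := by
  set d := Module.finrank ℝ E
  refine ⟨d * 2 ^ (d - 1) * μ.real (ball 0 1), fun R hR => ?_⟩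
  have hR0 : 0 < R := zero_lt_one.trans_le hR
  have hpow : (R + 1) ^ d - R ^ d ≤ d * (2 * R) ^ (d - 1) :=
    calc (R + 1) ^ d - R ^ d ≤ |R + 1 - R| * d * max |R + 1| |R| ^ (d - 1) :=
          (le_abs_self _).trans (abs_pow_sub_pow_le ..)
      _ = d * (R + 1) ^ (d - 1) := by
          rw [add_sub_cancel_left, abs_one, one_mul, abs_of_pos hR0,
            abs_of_nonneg (by positivity), max_eq_left (by linarith)]
      _ ≤ d * (2 * R) ^ (d - 1) := by gcongr; linarith
  rw [measureReal_closedBall_sdiff_ball μ hR0 (by linarith)]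
  calc _ ≤ d * (2 * R) ^ (d - 1) * μ.real (ball 0 1) := by gcongr
    _ = _ := by rw [mul_pow]; ring

lemma setIntegral_ball_le_integral_radialCutoff_mul (μ : Measure E)
    [IsFiniteMeasureOnCompacts μ] {f : E → ℝ} (hf : Continuous f) {B : ℝ} (hB0 : 0 ≤ B)
    (hB : ∀ x, -B ≤ f x) (R : ℝ) :
    ∫ x in ball 0 R, f x ∂μ ≤
      ∫ x, radialCutoff R x * f x ∂μ + B * μ.real (closedBall 0 (R + 1) \ ball 0 R) := by
  have hη : Continuous (radialCutoff R : E → ℝ) :=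
    Real.smoothTransition.continuous.comp (by fun_prop)
  have hint : IntegrableOn (fun x => radialCutoff R x * f x) (closedBall 0 (R + 1)) μ :=
    (integrable_mul_of_hasCompactSupport hη radialCutoff.hasCompactSupport hf).integrableOn
  have hsub : ball (0 : E) R ⊆ closedBall 0 (R + 1) :=
    (ball_subset_ball (by linarith)).trans ball_subset_closedBall
  have hball : ∫ x in ball 0 R, radialCutoff R x * f x ∂μ = ∫ x in ball 0 R, f x ∂μ :=
    setIntegral_congr_fun measurableSet_ball fun x hx => by
      simp only [radialCutoff.eq_one (mem_ball_zero_iff.1 hx).le, one_mul]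
  have hannulus : -(B * μ.real (closedBall 0 (R + 1) \ ball 0 R))
      ≤ ∫ x in closedBall 0 (R + 1) \ ball 0 R, radialCutoff R x * f x ∂μ := by
    have hfin : μ (closedBall 0 (R + 1) \ ball 0 R) ≠ ⊤ :=
      ((measure_mono Set.sdiff_subset).trans_lt (isCompact_closedBall _ _).measure_lt_top).ne
    rw [← neg_mul]
    refine setIntegral_ge_of_const_le_real (measurableSet_closedBall.diff measurableSet_ball)
      hfin (fun x _ => ?_) (hint.mono_set Set.sdiff_subset)
    calc -B ≤ radialCutoff R x * -B := by
          linarith [mul_le_of_le_one_left hB0 (radialCutoff.le_one (R := R) (x := x))]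
      _ ≤ radialCutoff R x * f x := mul_le_mul_of_nonneg_left (hB x) radialCutoff.nonneg
  have hwhole : ∫ x in closedBall 0 (R + 1), radialCutoff R x * f x ∂μ
      = ∫ x, radialCutoff R x * f x ∂μ :=
    setIntegral_eq_integral_of_forall_compl_eq_zero fun x hx => by
      rw [radialCutoff.eq_zero (le_of_lt (by simpa using hx)), zero_mul]
  rw [setIntegral_sdiff measurableSet_ball hint hsub, hball, hwhole] at hannulus
  linarith

end Annulus

theorem exists_setIntegral_ball_le_of_fderiv_eq_vdiv {N : ℕ} {v : EuclideanSpace ℝ (Fin N)}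
    {e g : EuclideanSpace ℝ (Fin N) → ℝ}
    {W : EuclideanSpace ℝ (Fin N) → EuclideanSpace ℝ (Fin N)} {G B : ℝ}
    (he : ContDiff ℝ 1 e) (hg : ContDiff ℝ 1 g)
    (hW : ContDiff ℝ 1 W) (hdiv : ∀ x, fderiv ℝ e x v = vdiv W x)
    (hWg : ∀ x, ‖W x‖ ≤ fderiv ℝ g x v) (hgG : ∀ x, |g x| ≤ G)
    (hlim : ∀ K : Set (EuclideanSpace ℝ (Fin N)), IsCompact K →
      TendstoUniformlyOn (fun (t : ℝ) x => e (x + t • v)) (fun _ => 0) atTop K)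
    (hB0 : 0 ≤ B) (hB : ∀ x, -B ≤ e x) :
    ∃ C : ℝ, ∀ R : ℝ, 1 ≤ R → ∫ x in ball 0 R, e x ≤ C * R ^ (N - 1) := by
  obtain ⟨L, hL⟩ := exists_lipschitzWith_smoothTransition
  obtain ⟨c, hc⟩ := exists_measureReal_annulus_le
    (volume : Measure (EuclideanSpace ℝ (Fin N)))
  have hG0 : 0 ≤ G := (abs_nonneg _).trans (hgG 0)
  refine ⟨(2 * G * L + B) * c, fun R hR => ?_⟩
  have hcutoff := integral_mul_le_of_fderiv_eq_vdiv he hg hW hdiv hWg hgG hlim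
    (radialCutoff.contDiff (zero_lt_one.trans_le hR) (n := 1)) radialCutoff.hasCompactSupport
  set A := volume.real (closedBall (0 : EuclideanSpace ℝ (Fin N)) (R + 1) \ ball 0 R)
  calc ∫ x in ball 0 R, e x ≤ (∫ x, radialCutoff R x * e x) + B * A :=
        setIntegral_ball_le_integral_radialCutoff_mul volume he.continuous hB0 hB R
    _ ≤ 2 * G * (∫ x, ‖fderiv ℝ (radialCutoff R) x‖) + B * A := by gcongr
    _ ≤ 2 * G * (L * A) + B * A := by
        gcongr; exact integral_norm_fderiv_radialCutoff_le volume hL R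
    _ = (2 * G * L + B) * A := by ring
    _ ≤ (2 * G * L + B) * (c * R ^ (N - 1)) := by
        gcongr; simpa only [finrank_euclideanSpace_fin] using hc R hR
    _ = _ := by ring

/-! ### Gradients and fluxes -/

section Flux

variable {F : Type*} [NormedAddCommGroup F] [InnerProductSpace ℝ F] [CompleteSpace F]
  {Φ : ℝ → ℝ} {w : F → ℝ}

lemma contDiff_gradient (hw : ContDiff ℝ 2 w) : ContDiff ℝ 1 (gradient w) :=
  (InnerProductSpace.toDual ℝ F).symm.toContinuousLinearEquiv.contDiff.comp
    (hw.fderiv_right (by norm_num))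

lemma fderiv_fderiv_apply_eq_inner (hw : ContDiff ℝ 2 w) (v p x : F) :
    fderiv ℝ (fun y => fderiv ℝ w y v) x p = ⟪fderiv ℝ (gradient w) x v, p⟫ := by
  have hdw : DifferentiableAt ℝ (fderiv ℝ w) x :=
    (hw.fderiv_right (m := 1) (by norm_num)).differentiable one_ne_zero x
  have hswap (q r : F) :
      fderiv ℝ (fun y => fderiv ℝ w y q) x r = fderiv ℝ (fderiv ℝ w) x r q := by
    rw [fderiv_clm_apply hdw (by fun_prop)]
    simp
  have hgrad : (fun y => fderiv ℝ w y p) = fun y => ⟪gradient w y, p⟫ :=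
    funext fun y => inner_gradient_left.symm
  have hsymm : fderiv ℝ (fderiv ℝ w) x p v = fderiv ℝ (fderiv ℝ w) x v p :=
    hw.contDiffAt.isSymmSndFDerivAt (by simp) p v
  rw [hswap, hsymm, ← hswap, hgrad, fderiv_inner_apply ℝ
    ((contDiff_gradient hw).differentiable one_ne_zero x) (by fun_prop)]
  simp

/-- The flux `Φ'(|∇w|²)∇w`, whose divergence is the quasilinear operator of the system. -/
def flux (Φ : ℝ → ℝ) (w : F → ℝ) (x : F) : F :=
  deriv Φ (‖gradient w x‖ ^ 2) • gradient w x

lemma contDiff_flux (hΦ : ContDiff ℝ 2 Φ) (hw : ContDiff ℝ 2 w) : ContDiff ℝ 1 (flux Φ w) := by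
  have hΦ' : ContDiff ℝ 1 (deriv Φ) := hΦ.deriv'
  exact (hΦ'.comp ((contDiff_gradient hw).norm_sq ℝ)).smul (contDiff_gradient hw)

lemma norm_flux (hΦ' : ∀ s, 0 < s → 0 < deriv Φ s) (x : F) :
    ‖flux Φ w x‖ = deriv Φ (‖gradient w x‖ ^ 2) * ‖gradient w x‖ := by
  rw [flux, norm_smul, Real.norm_eq_abs]
  rcases eq_or_ne (gradient w x) 0 with h | h
  · simp [h]
  · rw [abs_of_pos (hΦ' _ (by positivity))]

lemma fderiv_comp_norm_sq_gradient (hΦ : Differentiable ℝ Φ) (hw : ContDiff ℝ 2 w) (v x : F) :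
    fderiv ℝ (fun y => Φ (‖gradient w y‖ ^ 2)) x v
      = 2 * fderiv ℝ (fun y => fderiv ℝ w y v) x (flux Φ w x) := by
  have hgrad := ((contDiff_gradient hw).differentiable one_ne_zero x).hasFDerivAt
  have hcomp := (hΦ _).hasDerivAt.comp_hasFDerivAt x hgrad.norm_sq
  rw [fderiv_fderiv_apply_eq_inner hw, flux, inner_smul_right, real_inner_comm]
  refine (congrArg (fun L : F →L[ℝ] ℝ => L v) hcomp.fderiv).trans ?_
  simp only [_root_.smul_apply, ContinuousLinearMap.comp_apply, coe_innerSL_apply,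
    nsmul_eq_mul, Nat.cast_ofNat, smul_eq_mul]
  ring

end Flux

/-! ### The energy density -/

lemma fderiv_comp_pi_apply {E ι : Type*} [NormedAddCommGroup E] [NormedSpace ℝ E] [Fintype ι]
    [DecidableEq ι] {P : (ι → ℝ) → ℝ} {u : ι → E → ℝ} {x : E}
    (hP : DifferentiableAt ℝ P fun j => u j x) (hu : ∀ i, DifferentiableAt ℝ (u i) x) (v : E) :
    fderiv ℝ (fun y => P fun j => u j y) x v
      = ∑ i, fderiv ℝ (u i) x v * fderiv ℝ P (fun j => u j x) (Pi.single i 1) := by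
  have hcomp := hP.hasFDerivAt.comp x (hasFDerivAt_pi.2 fun j => (hu j).hasFDerivAt)
  calc fderiv ℝ (fun y => P fun j => u j y) x v
      = fderiv ℝ P (fun j => u j x) (fun j => fderiv ℝ (u j) x v) :=
        congrArg (fun L : E →L[ℝ] ℝ => L v) hcomp.fderiv
    _ = _ := by
        conv_lhs => rw [← Finset.univ_sum_single (fun j => fderiv ℝ (u j) x v), map_sum]
        refine Finset.sum_congr rfl fun i _ => ?_
        rw [← smul_eq_mul, ← map_smul, ← Pi.single_smul, smul_eq_mul, mul_one]

lemma exists_abs_eq_one_abs_eq_mul {α : Type*} {f : α → ℝ}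
    (hf : (∀ x, 0 ≤ f x) ∨ ∀ x, f x ≤ 0) : ∃ σ : ℝ, |σ| = 1 ∧ ∀ x, |f x| = σ * f x := by
  rcases hf with hf | hf
  · exact ⟨1, abs_one, fun x => by rw [abs_of_nonneg (hf x), one_mul]⟩
  · exact ⟨-1, by simp, fun x => by rw [abs_of_nonpos (hf x), neg_one_mul]⟩

lemma forall_nonneg_or_forall_nonpos_of_ne_zero {α : Type*} [TopologicalSpace α]
    [PreconnectedSpace α] {f : α → ℝ} (hf : Continuous f) (hf0 : ∀ x, f x ≠ 0) :
    (∀ x, 0 ≤ f x) ∨ ∀ x, f x ≤ 0 := by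
  by_contra! h
  obtain ⟨⟨x, hx⟩, y, hy⟩ := h
  obtain ⟨z, hz⟩ := mem_range_of_exists_le_of_exists_ge hf ⟨x, hx.le⟩ ⟨y, hy.le⟩
  exact hf0 z hz

section Energy

variable {ι : Type*} [Fintype ι]

/-- The energy density `∑ᵢ Φ(|∇uᵢ|²) - 2P(u) + 2P(a)` for a potential `P`, normalized so as to
vanish at the constant state `a` when `Φ 0 = 0`. -/
def energyDensity {F : Type*} [NormedAddCommGroup F] [InnerProductSpace ℝ F] [CompleteSpace F]
    (Φ : ℝ → ℝ) (P : (ι → ℝ) → ℝ) (a : ι → ℝ) (u : ι → F → ℝ) (x : F) : ℝ :=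
  (∑ i, Φ (‖gradient (u i) x‖ ^ 2)) - 2 * P (fun j => u j x) + 2 * P a

section Hilbert

variable {F : Type*} [NormedAddCommGroup F] [InnerProductSpace ℝ F] [CompleteSpace F]
  {Φ : ℝ → ℝ} {P : (ι → ℝ) → ℝ} {a : ι → ℝ} {u : ι → F → ℝ}

lemma contDiff_comp_norm_sq_gradient (hΦ : ContDiff ℝ 1 Φ) {w : F → ℝ} (hw : ContDiff ℝ 2 w) :
    ContDiff ℝ 1 fun x => Φ (‖gradient w x‖ ^ 2) :=
  hΦ.comp ((contDiff_gradient hw).norm_sq ℝ)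

lemma contDiff_energyDensity (hΦ : ContDiff ℝ 1 Φ) (hP : ContDiff ℝ 1 P)
    (hu : ∀ i, ContDiff ℝ 2 (u i)) : ContDiff ℝ 1 (energyDensity Φ P a u) := by
  have hPu : ContDiff ℝ 1 fun x => P fun j => u j x :=
    hP.comp (contDiff_pi.2 fun i => (hu i).of_le one_le_two)
  exact ((ContDiff.sum fun i _ => contDiff_comp_norm_sq_gradient hΦ (hu i)).sub
    (contDiff_const.mul hPu)).add contDiff_const

lemma exists_neg_le_energyDensity (hΦ : ∀ s, 0 ≤ s → 0 ≤ Φ s) (hP : Continuous P)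
    (hu : ∃ C : ℝ, ∀ i x, |u i x| ≤ C) : ∃ B, 0 ≤ B ∧ ∀ x, -B ≤ energyDensity Φ P a u x := by
  obtain ⟨C, hC⟩ := hu
  obtain ⟨D, hD⟩ := (isCompact_univ_pi fun _ : ι =>
    isCompact_Icc (a := -C) (b := C)).exists_bound_of_continuousOn hP.continuousOn
  have hPD (x : F) : |P fun j => u j x| ≤ D := hD _ fun i _ => abs_le.1 (hC i x)
  have hD0 : 0 ≤ D := (abs_nonneg _).trans (hPD 0)
  refine ⟨2 * D + 2 * |P a|, by positivity, fun x => ?_⟩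
  have hsum : 0 ≤ ∑ i, Φ (‖gradient (u i) x‖ ^ 2) :=
    Finset.sum_nonneg fun i _ => hΦ _ (by positivity)
  unfold energyDensity
  linarith [(abs_le.1 (hPD x)).2, neg_abs_le (P a)]

lemma tendstoUniformlyOn_energyDensity {α : Type*} {l : Filter α} {K : Set F} {τ : α → F → F}
    (hΦ : Continuous Φ) (hΦ0 : Φ 0 = 0) (hP : Continuous P)
    (hu : ∀ i, TendstoUniformlyOn (fun t x => u i (τ t x)) (fun _ => a i) l K)
    (hgrad : ∀ i, TendstoUniformlyOn (fun t x => gradient (u i) (τ t x)) (fun _ => 0) l K) :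
    TendstoUniformlyOn (fun t x => energyDensity Φ P a u (τ t x)) (fun _ => 0) l K := by
  simp only [← tendsto_prod_principal_iff] at hu hgrad ⊢
  have hΦgrad (i : ι) := (hΦ.tendsto _).comp ((hgrad i).norm.pow 2)
  have hPu := (hP.tendsto _).comp (tendsto_pi_nhds.2 hu)
  have hlim := ((tendsto_finsetSum Finset.univ fun i _ => hΦgrad i).sub
    (hPu.const_mul 2)).add_const (2 * P a)
  simpa [hΦ0, energyDensity, Function.HasUncurry.uncurry] using hlim

end Hilbert

variable {N : ℕ} {Φ : ℝ → ℝ} {P : (ι → ℝ) → ℝ} {a : ι → ℝ}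
  {u : ι → EuclideanSpace ℝ (Fin N) → ℝ}

/-- The vector field `2 ∑ᵢ ∂ᵥuᵢ Φ'(|∇uᵢ|²)∇uᵢ`; along solutions of the system its divergence is
the derivative in direction `v` of the energy density. -/
def energyFlux (Φ : ℝ → ℝ) (u : ι → EuclideanSpace ℝ (Fin N) → ℝ)
    (v x : EuclideanSpace ℝ (Fin N)) : EuclideanSpace ℝ (Fin N) :=
  ∑ i, (2 * fderiv ℝ (u i) x v) • flux Φ (u i) x

lemma contDiff_energyFlux (hΦ : ContDiff ℝ 2 Φ) (hu : ∀ i, ContDiff ℝ 2 (u i))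
    (v : EuclideanSpace ℝ (Fin N)) : ContDiff ℝ 1 (energyFlux Φ u v) :=
  ContDiff.sum fun i _ => (contDiff_const.mul (contDiff_fderiv_apply_const (hu i) v)).smul
    (contDiff_flux hΦ (hu i))

lemma vdiv_energyFlux (hΦ : ContDiff ℝ 2 Φ) (hu : ∀ i, ContDiff ℝ 2 (u i))
    (v x : EuclideanSpace ℝ (Fin N)) :
    vdiv (energyFlux Φ u v) x = ∑ i, (2 * fderiv ℝ (u i) x v * vdiv (flux Φ (u i)) x
      + 2 * fderiv ℝ (fun y => fderiv ℝ (u i) y v) x (flux Φ (u i) x)) := by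
  have hdu (i : ι) : DifferentiableAt ℝ (fun y => fderiv ℝ (u i) y v) x :=
    (contDiff_fderiv_apply_const (hu i) v).differentiable one_ne_zero x
  have hflux (i : ι) : DifferentiableAt ℝ (flux Φ (u i)) x :=
    (contDiff_flux hΦ (hu i)).differentiable one_ne_zero x
  unfold energyFlux
  rw [vdiv_sum fun i => ((hdu i).const_mul 2).fun_smul (hflux i)]
  refine Finset.sum_congr rfl fun i _ => ?_
  rw [vdiv_smul ((hdu i).const_mul 2) (hflux i), fderiv_const_mul (hdu i)]
  rfl

theorem fderiv_energyDensity [DecidableEq ι] (hΦ : ContDiff ℝ 2 Φ) (hP : Differentiable ℝ P)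
    (hu : ∀ i, ContDiff ℝ 2 (u i))
    (hsol : ∀ i x, -vdiv (flux Φ (u i)) x = fderiv ℝ P (fun j => u j x) (Pi.single i 1))
    (v x : EuclideanSpace ℝ (Fin N)) :
    fderiv ℝ (energyDensity Φ P a u) x v = vdiv (energyFlux Φ u v) x := by
  have hu1 (i : ι) : Differentiable ℝ (u i) := (hu i).differentiable two_ne_zero
  have hΦu (i : ι) : DifferentiableAt ℝ (fun y => Φ (‖gradient (u i) y‖ ^ 2)) x :=
    (contDiff_comp_norm_sq_gradient (hΦ.of_le one_le_two) (hu i)).differentiable one_ne_zero x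
  have hPu : DifferentiableAt ℝ (fun y => P fun j => u j y) x :=
    (hP _).comp x (differentiableAt_pi.2 fun i => hu1 i x)
  have hderiv : fderiv ℝ (energyDensity Φ P a u) x v
      = (∑ i, fderiv ℝ (fun y => Φ (‖gradient (u i) y‖ ^ 2)) x v)
        - 2 * fderiv ℝ (fun y => P fun j => u j y) x v := by
    have h := ((HasFDerivAt.fun_sum (u := Finset.univ) fun i _ => (hΦu i).hasFDerivAt).sub
      (hPu.hasFDerivAt.const_mul 2)).add_const (2 * P a)
    refine (congrArg (fun L : _ →L[ℝ] ℝ => L v) h.fderiv).trans ?_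
    simp
  rw [hderiv, vdiv_energyFlux hΦ hu, fderiv_comp_pi_apply (hP _) fun i => hu1 i x,
    Finset.mul_sum, ← Finset.sum_sub_distrib]
  refine Finset.sum_congr rfl fun i _ => ?_
  rw [fderiv_comp_norm_sq_gradient (hΦ.differentiable two_ne_zero) (hu i), ← hsol i x]
  ring

lemma norm_energyFlux_le {M : ℝ} (hM : ∀ i x, ‖flux Φ (u i) x‖ ≤ M)
    (v x : EuclideanSpace ℝ (Fin N)) :
    ‖energyFlux Φ u v x‖ ≤ ∑ i, 2 * M * |fderiv ℝ (u i) x v| := by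
  refine norm_sum_le_of_le _ fun i _ => ?_
  calc ‖(2 * fderiv ℝ (u i) x v) • flux Φ (u i) x‖
      = 2 * |fderiv ℝ (u i) x v| * ‖flux Φ (u i) x‖ := by
        rw [norm_smul, norm_mul, Real.norm_ofNat, Real.norm_eq_abs]
    _ ≤ 2 * |fderiv ℝ (u i) x v| * M := by gcongr; exact hM i x
    _ = 2 * M * |fderiv ℝ (u i) x v| := by ring

/-- Monotonicity makes `|∂ᵥuᵢ|` the derivative of the bounded function `±uᵢ`. -/
lemma exists_bounded_norm_energyFlux_le_fderiv {M : ℝ} (hu : ∀ i, ContDiff ℝ 1 (u i))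
    (hubdd : ∃ C : ℝ, ∀ i x, |u i x| ≤ C) (hM : ∀ i x, ‖flux Φ (u i) x‖ ≤ M)
    {v : EuclideanSpace ℝ (Fin N)}
    (hmono : ∀ i, (∀ x, 0 ≤ fderiv ℝ (u i) x v) ∨ ∀ x, fderiv ℝ (u i) x v ≤ 0) :
    ∃ g : EuclideanSpace ℝ (Fin N) → ℝ, ∃ G, ContDiff ℝ 1 g ∧ (∀ x, |g x| ≤ G) ∧
      ∀ x, ‖energyFlux Φ u v x‖ ≤ fderiv ℝ g x v := by
  obtain ⟨C, hC⟩ := hubdd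
  choose σ hσ1 hσ using fun i => exists_abs_eq_one_abs_eq_mul (hmono i)
  refine ⟨fun x => ∑ i, 2 * M * σ i * u i x, ∑ _i : ι, 2 * |M| * C,
    ContDiff.sum fun i _ => contDiff_const.mul (hu i), fun x => ?_, fun x => ?_⟩
  · refine (Finset.abs_sum_le_sum_abs _ _).trans (Finset.sum_le_sum fun i _ => ?_)
    rw [abs_mul, abs_mul, abs_mul, hσ1, mul_one, abs_two]
    gcongr
    exact hC i x
  · have hdiff (i : ι) : DifferentiableAt ℝ (u i) x := (hu i).differentiable one_ne_zero x
    refine (norm_energyFlux_le hM v x).trans_eq ?_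
    rw [fderiv_fun_sum fun i _ => (hdiff i).const_mul _, _root_.sum_apply]
    refine Finset.sum_congr rfl fun i _ => ?_
    rw [hσ, fderiv_const_mul (hdiff i), _root_.smul_apply, smul_eq_mul, mul_assoc (2 * M)]

end Energy

theorem energy_upper_bound_H_monotone_general {ι : Type*} [Fintype ι] [DecidableEq ι] {N : ℕ}
    {Φ : ℝ → ℝ} (hΦ : ContDiff ℝ 2 Φ) (hΦ0 : Φ 0 = 0) (hΦnonneg : ∀ s, 0 ≤ s → 0 ≤ Φ s)
    {Ht : (ι → ℝ) → ℝ} (hHt : ContDiff ℝ 1 Ht)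
    {u : ι → EuclideanSpace ℝ (Fin N) → ℝ} (hu : ∀ i, ContDiff ℝ 2 (u i))
    (hsol : ∀ i x, -vdiv (flux Φ (u i)) x = fderiv ℝ Ht (fun j => u j x) (Pi.single i 1))
    (hubdd : ∃ C : ℝ, ∀ i x, |u i x| ≤ C)
    {M : ℝ} (hM : ∀ i x, ‖flux Φ (u i) x‖ ≤ M)
    {v : EuclideanSpace ℝ (Fin N)}
    (hmono : ∀ i, (∀ x, 0 ≤ fderiv ℝ (u i) x v) ∨ ∀ x, fderiv ℝ (u i) x v ≤ 0)
    {a : ι → ℝ}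
    (hC1conv : ∀ i, ∀ K : Set (EuclideanSpace ℝ (Fin N)), IsCompact K →
      TendstoUniformlyOn (fun (t : ℝ) x => u i (x + t • v)) (fun _ => a i) atTop K ∧
      TendstoUniformlyOn (fun (t : ℝ) x => gradient (u i) (x + t • v)) (fun _ => 0) atTop K) :
    ∃ C : ℝ, ∀ R : ℝ, 1 ≤ R →
      ∫ x in ball 0 R, energyDensity Φ Ht a u x ≤ C * R ^ (N - 1) := by
  have hu1 (i : ι) : ContDiff ℝ 1 (u i) := (hu i).of_le one_le_two
  have hΦ1 : ContDiff ℝ 1 Φ := hΦ.of_le one_le_two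
  obtain ⟨g, G, hg, hgG, hWg⟩ := exists_bounded_norm_energyFlux_le_fderiv hu1 hubdd hM hmono
  obtain ⟨B, hB0, hB⟩ := exists_neg_le_energyDensity (a := a) hΦnonneg hHt.continuous hubdd
  exact exists_setIntegral_ball_le_of_fderiv_eq_vdiv (contDiff_energyDensity hΦ1 hHt hu) hg
    (contDiff_energyFlux hΦ hu v)
    (fderiv_energyDensity hΦ (hHt.differentiable one_ne_zero) hu hsol v) hWg hgG
    (fun K hK => tendstoUniformlyOn_energyDensity hΦ1.continuous hΦ0 hHt.continuous
      (fun i => (hC1conv i K hK).1) fun i => (hC1conv i K hK).2) hB0 hB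

/-- **Energy upper bound for H-monotone solutions**: a bounded `H`-monotone solution of
the quasilinear system `-div(Φ'(|∇uᵢ|²)∇uᵢ) = Hᵢ(u)` on `ℝ^{n+1}` whose components
converge (in `C¹` on compact sets) to constants `aᵢ` as `x_{n+1} → ∞` satisfies
`∫_{B_R} (∑ᵢ Φ(|∇uᵢ|²) - 2H̃(u) + 2H̃(a)) ≤ C Rⁿ` for all `R ≥ 1`. -/
theorem energy_upper_bound_H_monotone
    (n m : ℕ) (hm : 1 ≤ m)
    (Φ : ℝ → ℝ) (hΦ : ContDiff ℝ 2 Φ) (hΦ0 : Φ 0 = 0)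
    (hΦpos : ∀ s : ℝ, 0 < s → 0 < Φ s)
    (hΦ'pos : ∀ s : ℝ, 0 < s → 0 < deriv Φ s)
    (hΦell : ∀ s : ℝ, 0 < s → 0 < deriv Φ s + 2 * s * deriv (deriv Φ) s)
    (H : Fin m → (Fin m → ℝ) → ℝ) (hH : ∀ i, ContDiff ℝ 1 (H i))
    (Ht : (Fin m → ℝ) → ℝ) (hHt : ContDiff ℝ 2 Ht)
    (hHtgrad : ∀ i y, fderiv ℝ Ht y (Pi.single i 1) = H i y)
    (u : Fin m → EuclideanSpace ℝ (Fin (n + 1)) → ℝ)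
    (hu : ∀ i, ContDiff ℝ 2 (u i))
    (hsol : ∀ i x, -vdiv (fun y => deriv Φ (‖gradient (u i) y‖ ^ 2) • gradient (u i) y) x
        = H i (fun j => u j x))
    -- `u` is bounded with bounded gradients
    (hubdd : ∃ C : ℝ, ∀ i x, |u i x| ≤ C)
    (hgradbdd : ∃ C : ℝ, ∀ i x, ‖gradient (u i) x‖ ≤ C)
    (M : ℝ) (hM : ∀ i x, deriv Φ (‖gradient (u i) x‖ ^ 2) * ‖gradient (u i) x‖ ≤ M)
    -- `u` is H-monotone
    (hmono : ∀ i x, fderiv ℝ (u i) x (elast n) ≠ 0)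
    (horient : ∀ i j : Fin m, i ≤ j → ∀ x,
      0 < fderiv ℝ (H i) (fun k => u k x) (Pi.single j 1)
        * fderiv ℝ (u i) x (elast n) * fderiv ℝ (u j) x (elast n))
    -- limits in the `x_{n+1}` direction
    (a : Fin m → ℝ)
    (hlim : ∀ i x, Tendsto (fun t : ℝ => u i (x + t • elast n)) atTop (nhds (a i)))
    -- the shifted functions converge in `C¹` on compact sets
    (hC1conv : ∀ i, ∀ K : Set (EuclideanSpace ℝ (Fin (n + 1))), IsCompact K →
      TendstoUniformlyOn (fun (t : ℝ) x => u i (x + t • elast n)) (fun _ => a i) atTop K ∧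
      TendstoUniformlyOn (fun (t : ℝ) x => gradient (u i) (x + t • elast n))
        (fun _ => 0) atTop K) :
    ∃ C : ℝ, ∀ R : ℝ, 1 ≤ R →
      (∫ x in ball (0 : EuclideanSpace ℝ (Fin (n + 1))) R,
          ((∑ i, Φ (‖gradient (u i) x‖ ^ 2))
            - 2 * Ht (fun j => u j x) + 2 * Ht a))
        ≤ C * R ^ n := by
  exact energy_upper_bound_H_monotone_general hΦ hΦ0
    (fun s hs => hs.eq_or_lt.elim (fun h => by rw [← h, hΦ0]) fun h => (hΦpos s h).le)
    (hHt.of_le one_le_two) hu (fun i x => (hsol i x).trans (hHtgrad i _).symm) hubdd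
    (fun i x => (norm_flux hΦ'pos x).trans_le (hM i x))
    (fun i => forall_nonneg_or_forall_nonpos_of_ne_zero
      (contDiff_fderiv_apply_const (hu i) _).continuous (hmono i)) hC1conv
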